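/- For each t = 0,…,T−1 there exists a function φ_t such that along every realization of positive probability of the closed-loop system, the next new-state realization of agent 2 satisfies s_{t+1}^2 = φ_t(s_t^2, π_t^2, γ_t^{[2,1]}, u_t^2, w_t, v_{t+1}^1, v_{t+1}^2), where s_t^2 = (x_t, l_t^{[1,2]}) and l_{t+1}^{[1,2]} = l_t^{[1,2]} ∪ {y_{t+1}^1, u_t^1} with u_t^1 = γ_t^{[2,1]}(e_t(π_t^2, l_t^{[1,2]})), x_{t+1} = f_t(x_t, u_t^1, u_t^2, w_t), and y_{t+1}^1 = h_{t+1}^1(x_{t+1}, v_{t+1}^1). Similarly, there exists a function φ̂_t such that the new information of agent 2 satisfies z_{t+1}^2 = φ̂_t(s_t^2, π_t^2, γ_t^{[2,1]}, u_t^2, w_t, v_{t+1}^1, v_{t+1}^2). -/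

import Mathlib

/-!
Common framework: a two-agent sequential dynamic team with nested information
structure (Dave & Malikopoulos, "Structural results for decentralized
stochastic control with a nested information structure").

* `X t` : state space at time `t`; `U1 t`, `U2 t` : action spaces of agents 1 and 2;
* `W t` : disturbance; `V1 t`, `V2 t` : measurement noises; `Y1 t`, `Y2 t` : observations.
* Dynamics `X_{t+1} = f t X_t U¹_t U²_t W_t`, observations `Y^k_t = h^k t X_t V^k_t`.
* Memories `M²_t = (Y²_{0:t}, U²_{0:t-1})`, `L_t^{[1,2]} = (Y¹_{0:t}, U¹_{0:t-1})`,
  `M¹_t = (L_t^{[1,2]}, M²_t)` (nested information).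
* The primitive random variables are independent with given PMFs; the sample
  space for horizon `T` is `ΩT`, with the product mass function `mass`.
-/

open scoped Classical
open Finset

namespace NestedTeam

noncomputable section

/-- Memory of agent 2 at time `t`: observations `Y²₀,…,Y²ₜ` and actions `U²₀,…,U²ₜ₋₁`. -/
abbrev M2 (Y2 U2 : ℕ → Type) (t : ℕ) : Type :=
  ((s : Fin (t + 1)) → Y2 s) × ((s : Fin t) → U2 s)

/-- The private information `L_t^{[1,2]} = M¹_t \ M²_t` of agent 1. -/
abbrev Lp (Y1 U1 : ℕ → Type) (t : ℕ) : Type :=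
  ((s : Fin (t + 1)) → Y1 s) × ((s : Fin t) → U1 s)

/-- Memory of agent 1 at time `t` (nested information: it contains `M²_t`). -/
abbrev M1 (Y1 Y2 U1 U2 : ℕ → Type) (t : ℕ) : Type :=
  Lp Y1 U1 t × M2 Y2 U2 t

/-- The system: dynamics, observation maps and per-stage cost. -/
structure Sys (X U1 U2 W V1 V2 Y1 Y2 : ℕ → Type) where
  f : ∀ t, X t → U1 t → U2 t → W t → X (t + 1)
  h1 : ∀ t, X t → V1 t → Y1 t
  h2 : ∀ t, X t → V2 t → Y2 t
  c : ∀ t, X t → U1 t → U2 t → ℝ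

/-- A control strategy profile: `U¹_t = g1 t M¹_t`, `U²_t = g2 t M²_t`. -/
structure Strat (U1 U2 Y1 Y2 : ℕ → Type) where
  g1 : ∀ t, M1 Y1 Y2 U1 U2 t → U1 t
  g2 : ∀ t, M2 Y2 U2 t → U2 t

/-- A realization of the primitive random variables. -/
structure Prim (X W V1 V2 : ℕ → Type) where
  x0 : X 0
  w : ∀ t, W t
  v1 : ∀ t, V1 t
  v2 : ∀ t, V2 t

variable {X U1 U2 W V1 V2 Y1 Y2 : ℕ → Type}

/-- The closed-loop trajectory: states `X_{0:t}` and actions `U^{1:2}_{0:t-1}`. -/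
def hist (S : Sys X U1 U2 W V1 V2 Y1 Y2) (g : Strat U1 U2 Y1 Y2) (ρ : Prim X W V1 V2) :
    (t : ℕ) → ((s : Fin (t + 1)) → X s) × ((s : Fin t) → U1 s × U2 s)
  | 0 => (Fin.cons (α := fun s : Fin 1 => X s) ρ.x0 (fun i => i.elim0), fun i => i.elim0)
  | t + 1 =>
    let p := hist S g ρ t
    let y1 : (s : Fin (t + 1)) → Y1 s := fun s => S.h1 s (p.1 s) (ρ.v1 s)
    let y2 : (s : Fin (t + 1)) → Y2 s := fun s => S.h2 s (p.1 s) (ρ.v2 s)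
    let m1 : M1 Y1 Y2 U1 U2 t := ((y1, fun s => (p.2 s).1), (y2, fun s => (p.2 s).2))
    let a1 := g.g1 t m1
    let a2 := g.g2 t m1.2
    (Fin.snoc (α := fun s : Fin (t + 2) => X s) p.1 (S.f t (p.1 (Fin.last t)) a1 a2 (ρ.w t)),
     Fin.snoc (α := fun s : Fin (t + 1) => U1 s × U2 s) p.2 (a1, a2))

/-- State `X_t` along the closed loop. -/
def xTraj (S : Sys X U1 U2 W V1 V2 Y1 Y2) (g : Strat U1 U2 Y1 Y2) (ρ : Prim X W V1 V2)
    (t : ℕ) : X t := (hist S g ρ t).1 (Fin.last t)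

/-- `L_t^{[1,2]} = (Y¹_{0:t}, U¹_{0:t-1})` along the closed loop. -/
def lpTraj (S : Sys X U1 U2 W V1 V2 Y1 Y2) (g : Strat U1 U2 Y1 Y2) (ρ : Prim X W V1 V2)
    (t : ℕ) : Lp Y1 U1 t :=
  (fun s => S.h1 s ((hist S g ρ t).1 s) (ρ.v1 s), fun s => ((hist S g ρ t).2 s).1)

/-- `M²_t = (Y²_{0:t}, U²_{0:t-1})` along the closed loop. -/
def m2Traj (S : Sys X U1 U2 W V1 V2 Y1 Y2) (g : Strat U1 U2 Y1 Y2) (ρ : Prim X W V1 V2)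
    (t : ℕ) : M2 Y2 U2 t :=
  (fun s => S.h2 s ((hist S g ρ t).1 s) (ρ.v2 s), fun s => ((hist S g ρ t).2 s).2)

/-- `M¹_t` along the closed loop. -/
def m1Traj (S : Sys X U1 U2 W V1 V2 Y1 Y2) (g : Strat U1 U2 Y1 Y2) (ρ : Prim X W V1 V2)
    (t : ℕ) : M1 Y1 Y2 U1 U2 t := (lpTraj S g ρ t, m2Traj S g ρ t)

/-- Action `U¹_t` along the closed loop. -/
def u1Traj (S : Sys X U1 U2 W V1 V2 Y1 Y2) (g : Strat U1 U2 Y1 Y2) (ρ : Prim X W V1 V2)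
    (t : ℕ) : U1 t := g.g1 t (m1Traj S g ρ t)

/-- Action `U²_t` along the closed loop. -/
def u2Traj (S : Sys X U1 U2 W V1 V2 Y1 Y2) (g : Strat U1 U2 Y1 Y2) (ρ : Prim X W V1 V2)
    (t : ℕ) : U2 t := g.g2 t (m2Traj S g ρ t)

/-- Observation `Y¹_t` along the closed loop. -/
def y1Traj (S : Sys X U1 U2 W V1 V2 Y1 Y2) (g : Strat U1 U2 Y1 Y2) (ρ : Prim X W V1 V2)
    (t : ℕ) : Y1 t := S.h1 t (xTraj S g ρ t) (ρ.v1 t)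

/-- Observation `Y²_t` along the closed loop. -/
def y2Traj (S : Sys X U1 U2 W V1 V2 Y1 Y2) (g : Strat U1 U2 Y1 Y2) (ρ : Prim X W V1 V2)
    (t : ℕ) : Y2 t := S.h2 t (xTraj S g ρ t) (ρ.v2 t)

/-- New information `Z¹_{t+1} = (Y¹_{t+1}, U¹_t, Y²_{t+1}, U²_t)` of agent 1. -/
def z1Traj (S : Sys X U1 U2 W V1 V2 Y1 Y2) (g : Strat U1 U2 Y1 Y2) (ρ : Prim X W V1 V2)
    (t : ℕ) : Y1 (t + 1) × U1 t × Y2 (t + 1) × U2 t :=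
  (y1Traj S g ρ (t + 1), u1Traj S g ρ t, y2Traj S g ρ (t + 1), u2Traj S g ρ t)

/-- New information `Z²_{t+1} = (Y²_{t+1}, U²_t)` of agent 2. -/
def z2Traj (S : Sys X U1 U2 W V1 V2 Y1 Y2) (g : Strat U1 U2 Y1 Y2) (ρ : Prim X W V1 V2)
    (t : ℕ) : Y2 (t + 1) × U2 t := (y2Traj S g ρ (t + 1), u2Traj S g ρ t)

/-- Sample space of primitive random variables for horizon `T`. -/
abbrev ΩT (X W V1 V2 : ℕ → Type) (T : ℕ) : Type :=
  X 0 × ((t : Fin (T + 1)) → W t) × ((t : Fin (T + 1)) → V1 t) × ((t : Fin (T + 1)) → V2 t)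

/-- Extend a finite-horizon family to all times (by junk beyond the horizon). -/
def ext {α : ℕ → Type} [∀ t, Inhabited (α t)] (T : ℕ) (a : (t : Fin (T + 1)) → α t)
    (t : ℕ) : α t := if h : t < T + 1 then a ⟨t, h⟩ else default

/-- The primitive realization corresponding to a sample point. -/
def toPrim [∀ t, Inhabited (W t)] [∀ t, Inhabited (V1 t)] [∀ t, Inhabited (V2 t)]
    (T : ℕ) (ω : ΩT X W V1 V2 T) : Prim X W V1 V2 :=
  ⟨ω.1, ext T ω.2.1, ext T ω.2.2.1, ext T ω.2.2.2⟩

/-- The (known) probability mass functions of the mutually independent primitive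
random variables. -/
structure PrimPMF (X W V1 V2 : ℕ → Type) [Fintype (X 0)] [∀ t, Fintype (W t)]
    [∀ t, Fintype (V1 t)] [∀ t, Fintype (V2 t)] where
  pX0 : X 0 → ℝ
  pW : ∀ t, W t → ℝ
  pV1 : ∀ t, V1 t → ℝ
  pV2 : ∀ t, V2 t → ℝ
  pX0_nonneg : ∀ x, 0 ≤ pX0 x
  pX0_sum : ∑ x, pX0 x = 1
  pW_nonneg : ∀ t w, 0 ≤ pW t w
  pW_sum : ∀ t, ∑ w, pW t w = 1
  pV1_nonneg : ∀ t v, 0 ≤ pV1 t v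
  pV1_sum : ∀ t, ∑ v, pV1 t v = 1
  pV2_nonneg : ∀ t v, 0 ≤ pV2 t v
  pV2_sum : ∀ t, ∑ v, pV2 t v = 1

variable [Fintype (X 0)] [∀ t, Fintype (W t)] [∀ t, Fintype (V1 t)] [∀ t, Fintype (V2 t)]
variable [∀ t, Inhabited (W t)] [∀ t, Inhabited (V1 t)] [∀ t, Inhabited (V2 t)]

/-- Product mass of a sample point (independent primitives). -/
def mass (P : PrimPMF X W V1 V2) (T : ℕ) (ω : ΩT X W V1 V2 T) : ℝ :=
  P.pX0 ω.1 * (∏ t : Fin (T + 1), P.pW t (ω.2.1 t)) *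
    (∏ t : Fin (T + 1), P.pV1 t (ω.2.2.1 t)) * (∏ t : Fin (T + 1), P.pV2 t (ω.2.2.2 t))

/-- Elementary conditional probability `P(A | B)` on a finite sample space. -/
def condProb {Ω : Type*} [Fintype Ω] (P : Ω → ℝ) (A B : Ω → Prop) : ℝ :=
  (∑ ω, if A ω ∧ B ω then P ω else 0) / (∑ ω, if B ω then P ω else 0)

/-- Elementary conditional expectation `E[F | B]` on a finite sample space. -/
def condExp {Ω : Type*} [Fintype Ω] (P : Ω → ℝ) (F : Ω → ℝ) (B : Ω → Prop) : ℝ :=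
  (∑ ω, if B ω then P ω * F ω else 0) / (∑ ω, if B ω then P ω else 0)

/-- Agent 1's information state `Π¹_t = P(X_t = · | M¹_t)` at the realization `ω`. -/
def infoState1 (S : Sys X U1 U2 W V1 V2 Y1 Y2) (g : Strat U1 U2 Y1 Y2)
    (P : PrimPMF X W V1 V2) (T : ℕ) (ω : ΩT X W V1 V2 T) (t : ℕ) : X t → ℝ :=
  fun x => condProb (mass P T)
    (fun ω' => xTraj S g (toPrim T ω') t = x)
    (fun ω' => m1Traj S g (toPrim T ω') t = m1Traj S g (toPrim T ω) t)

/-- Agent 2's information state `Π²_t = P((X_t, L_t^{[1,2]}) = · | M²_t)` at `ω`. -/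
def infoState2 (S : Sys X U1 U2 W V1 V2 Y1 Y2) (g : Strat U1 U2 Y1 Y2)
    (P : PrimPMF X W V1 V2) (T : ℕ) (ω : ΩT X W V1 V2 T) (t : ℕ) :
    X t × Lp Y1 U1 t → ℝ :=
  fun sl => condProb (mass P T)
    (fun ω' => (xTraj S g (toPrim T ω') t, lpTraj S g (toPrim T ω') t) = sl)
    (fun ω' => m2Traj S g (toPrim T ω') t = m2Traj S g (toPrim T ω) t)

/-- Per-stage cost along the closed loop. -/
def stageCost (S : Sys X U1 U2 W V1 V2 Y1 Y2) (g : Strat U1 U2 Y1 Y2) (ρ : Prim X W V1 V2)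
    (t : ℕ) : ℝ := S.c t (xTraj S g ρ t) (u1Traj S g ρ t) (u2Traj S g ρ t)

/-- Expected cost-to-go `𝒥_{t₀}(g) = E[Σ_{t=t₀}^T c_t(X_t,U¹_t,U²_t)]`. -/
def costToGo (S : Sys X U1 U2 W V1 V2 Y1 Y2) (g : Strat U1 U2 Y1 Y2)
    (P : PrimPMF X W V1 V2) (T t0 : ℕ) : ℝ :=
  ∑ ω : ΩT X W V1 V2 T, mass P T ω * ∑ t ∈ Finset.Icc t0 T, stageCost S g (toPrim T ω) t

/-- Expected total cost `𝒥(g) = E[Σ_{t=0}^T c_t(X_t,U¹_t,U²_t)]`. -/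
def totalCost (S : Sys X U1 U2 W V1 V2 Y1 Y2) (g : Strat U1 U2 Y1 Y2)
    (P : PrimPMF X W V1 V2) (T : ℕ) : ℝ := costToGo S g P T 0

/-- `(g, ψ²)` is a compatible control/prescription pair: agent 1's action is
generated by the prescription `Γ_t^{[2,1]} = ψ_t(M²_t)` applied to `Π¹_t`. -/
def Compat (S : Sys X U1 U2 W V1 V2 Y1 Y2) (g : Strat U1 U2 Y1 Y2)
    (ψ : ∀ t, M2 Y2 U2 t → (X t → ℝ) → U1 t) (P : PrimPMF X W V1 V2) (T : ℕ) : Prop :=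
  ∀ t, t ≤ T → ∀ ω : ΩT X W V1 V2 T, 0 < mass P T ω →
    u1Traj S g (toPrim T ω) t =
      ψ t (m2Traj S g (toPrim T ω) t) (infoState1 S g P T ω t)

/-- The map `e_t` of Lemma 4: conditioning a joint distribution on
`𝒳_t × 𝓛_t^{[1,2]}` on its second component. -/
def eMap [∀ t, Fintype (X t)] (t : ℕ) (π2 : X t × Lp Y1 U1 t → ℝ) (l : Lp Y1 U1 t) :
    X t → ℝ := fun x => π2 (x, l) / ∑ x', π2 (x', l)

/-!
`S²_{t+1}` and `Z²_{t+1}` are read off from `S²_t`, the noises and the pair of actions, so it is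
enough to recover `U¹_t = Γ_t^{[2,1]}(Π¹_t)` from the arguments of `φ_t`. This is Lemma 4 of the
paper: conditioning `Π²_t` on its second component is the chain rule
`P(A ∩ B | C) / P(B | C) = P(A | B ∩ C)`, and a realization of positive mass conditions on an
event `C` of positive probability.
-/

theorem apply_snoc {n : ℕ} {α β : Fin (n + 1) → Type*} (F : ∀ i, α i → β i)
    (p : ∀ i : Fin n, α i.castSucc) (a : α (Fin.last n)) :
    (fun i => F i (Fin.snoc (α := α) p a i)) =
      Fin.snoc (α := β) (fun i => F i.castSucc (p i)) (F (Fin.last n) a) := by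
  funext i
  cases i using Fin.lastCases with
  | last => simp only [Fin.snoc_last]
  | cast i => simp only [Fin.snoc_castSucc]

section Dynamics

omit [Fintype (X 0)] [∀ t, Fintype (W t)] [∀ t, Fintype (V1 t)] [∀ t, Fintype (V2 t)]
  [∀ t, Inhabited (W t)] [∀ t, Inhabited (V1 t)] [∀ t, Inhabited (V2 t)]

/-- The update `L_{t+1}^{[1,2]} = L_t^{[1,2]} ∪ {Y¹_{t+1}, U¹_t}` of agent 1's private information,
encoded by appending to the tuples of observations and of actions. -/
def Lp.snoc {t : ℕ} (l : Lp Y1 U1 t) (y : Y1 (t + 1)) (u : U1 t) : Lp Y1 U1 (t + 1) :=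
  (Fin.snoc (α := fun s : Fin (t + 2) => Y1 s) l.1 y,
    Fin.snoc (α := fun s : Fin (t + 1) => U1 s) l.2 u)

/-- The new state `S²_{t+1} = (X_{t+1}, L_{t+1}^{[1,2]})` of agent 2 as a function of `S²_t`, both
actions and the noises; `φ_t` is obtained by substituting agent 1's prescribed action. -/
def nextNewState (S : Sys X U1 U2 W V1 V2 Y1 Y2) (t : ℕ) (s : X t × Lp Y1 U1 t)
    (u1 : U1 t) (u2 : U2 t) (w : W t) (v1 : V1 (t + 1)) : X (t + 1) × Lp Y1 U1 (t + 1) :=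
  let x := S.f t s.1 u1 u2 w
  (x, s.2.snoc (S.h1 (t + 1) x v1) u1)

/-- The new information `Z²_{t+1} = (Y²_{t+1}, U²_t)` of agent 2 as a function of `X_t`, both
actions and the noises; `φ̂_t` is obtained by substituting agent 1's prescribed action. -/
def nextNewInfo (S : Sys X U1 U2 W V1 V2 Y1 Y2) (t : ℕ) (x : X t)
    (u1 : U1 t) (u2 : U2 t) (w : W t) (v2 : V2 (t + 1)) : Y2 (t + 1) × U2 t :=
  (S.h2 (t + 1) (S.f t x u1 u2 w) v2, u2)

variable (S : Sys X U1 U2 W V1 V2 Y1 Y2) (g : Strat U1 U2 Y1 Y2) (ρ : Prim X W V1 V2) (t : ℕ)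

theorem xTraj_succ :
    xTraj S g ρ (t + 1) = S.f t (xTraj S g ρ t) (u1Traj S g ρ t) (u2Traj S g ρ t) (ρ.w t) :=
  Fin.snoc_last (α := fun s : Fin (t + 2) => X s) _ _

theorem hist_succ :
    hist S g ρ (t + 1) =
      (Fin.snoc (α := fun s : Fin (t + 2) => X s) (hist S g ρ t).1 (xTraj S g ρ (t + 1)),
        Fin.snoc (α := fun s : Fin (t + 1) => U1 s × U2 s) (hist S g ρ t).2
          (u1Traj S g ρ t, u2Traj S g ρ t)) := by
  rw [xTraj_succ]
  rfl

theorem lpTraj_succ :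
    lpTraj S g ρ (t + 1) = (lpTraj S g ρ t).snoc (y1Traj S g ρ (t + 1)) (u1Traj S g ρ t) := by
  rw [lpTraj, hist_succ]
  exact Prod.ext
    (apply_snoc (α := fun s : Fin (t + 2) => X s) (β := fun s : Fin (t + 2) => Y1 s)
      (fun s x => S.h1 s x (ρ.v1 s)) _ _)
    (apply_snoc (α := fun s : Fin (t + 1) => U1 s × U2 s) (β := fun s : Fin (t + 1) => U1 s)
      (fun _ => Prod.fst) _ _)

theorem newState_succ :
    (xTraj S g ρ (t + 1), lpTraj S g ρ (t + 1)) =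
      nextNewState S t (xTraj S g ρ t, lpTraj S g ρ t) (u1Traj S g ρ t) (u2Traj S g ρ t)
        (ρ.w t) (ρ.v1 (t + 1)) := by
  rw [lpTraj_succ, y1Traj, xTraj_succ, nextNewState]

theorem z2Traj_eq_nextNewInfo :
    z2Traj S g ρ t =
      nextNewInfo S t (xTraj S g ρ t) (u1Traj S g ρ t) (u2Traj S g ρ t)
        (ρ.w t) (ρ.v2 (t + 1)) := by
  rw [z2Traj, y2Traj, xTraj_succ, nextNewInfo]

end Dynamics

section ConditionalProbability

variable {Ω : Type*} [Fintype Ω] {p : Ω → ℝ}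

theorem sum_ite_pos (hp : ∀ ω, 0 ≤ p ω) {B : Ω → Prop} {ω : Ω} (hB : B ω) (hω : 0 < p ω) :
    0 < ∑ ω', if B ω' then p ω' else 0 := by
  rw [← sum_filter]
  exact sum_pos' (fun ω' _ => hp ω') ⟨ω, mem_filter.2 ⟨mem_univ ω, hB⟩, hω⟩

theorem sum_condProb_eq_and {A : Type*} [Fintype A] (p : Ω → ℝ) (a : Ω → A) (B C : Ω → Prop) :
    ∑ x, condProb p (fun ω => a ω = x ∧ B ω) C = condProb p B C := by
  simp only [condProb, ← sum_div]
  rw [sum_comm]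
  simp only [and_assoc, ite_and, sum_ite_eq, mem_univ, if_true]

theorem condProb_and_div_condProb (A B : Ω → Prop) {C : Ω → Prop}
    (hC : (∑ ω, if C ω then p ω else 0) ≠ 0) :
    condProb p (fun ω => A ω ∧ B ω) C / condProb p B C =
      condProb p A (fun ω => B ω ∧ C ω) := by
  simp only [condProb, div_div_div_cancel_right₀ hC, and_assoc]
  -- The two denominators carry different decidability instances for `B ω ∧ C ω`.
  congr!

end ConditionalProbability

omit [∀ t, Inhabited (W t)] [∀ t, Inhabited (V1 t)] [∀ t, Inhabited (V2 t)] in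
theorem mass_nonneg (P : PrimPMF X W V1 V2) (T : ℕ) (ω : ΩT X W V1 V2 T) : 0 ≤ mass P T ω :=
  mul_nonneg
    (mul_nonneg
      (mul_nonneg (P.pX0_nonneg _) (prod_nonneg fun t _ => P.pW_nonneg t _))
      (prod_nonneg fun t _ => P.pV1_nonneg t _))
    (prod_nonneg fun t _ => P.pV2_nonneg t _)

section InformationState

omit [Fintype (X 0)]

variable [∀ t, Fintype (X t)] (S : Sys X U1 U2 W V1 V2 Y1 Y2) (g : Strat U1 U2 Y1 Y2)
  {P : PrimPMF X W V1 V2} {T : ℕ} {ω : ΩT X W V1 V2 T}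

theorem eMap_infoState2 (hω : 0 < mass P T ω) (t : ℕ) :
    eMap t (infoState2 S g P T ω t) (lpTraj S g (toPrim T ω) t) = infoState1 S g P T ω t := by
  funext x
  have hM2 := sum_ite_pos (mass_nonneg P T)
    (B := fun ω' => m2Traj S g (toPrim T ω') t = m2Traj S g (toPrim T ω) t) rfl hω
  simp only [eMap, infoState1, infoState2, m1Traj, Prod.mk.injEq, sum_condProb_eq_and]
  exact condProb_and_div_condProb _ _ hM2.ne'

theorem newstate_update_functions_general (hω : 0 < mass P T ω) {t : ℕ} {γ : (X t → ℝ) → U1 t}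
    (hγ : u1Traj S g (toPrim T ω) t = γ (infoState1 S g P T ω t)) :
    (xTraj S g (toPrim T ω) (t + 1), lpTraj S g (toPrim T ω) (t + 1)) =
        nextNewState S t (xTraj S g (toPrim T ω) t, lpTraj S g (toPrim T ω) t)
          (γ (eMap t (infoState2 S g P T ω t) (lpTraj S g (toPrim T ω) t)))
          (u2Traj S g (toPrim T ω) t) ((toPrim T ω).w t) ((toPrim T ω).v1 (t + 1)) ∧
      z2Traj S g (toPrim T ω) t =
        nextNewInfo S t (xTraj S g (toPrim T ω) t)
          (γ (eMap t (infoState2 S g P T ω t) (lpTraj S g (toPrim T ω) t)))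
          (u2Traj S g (toPrim T ω) t) ((toPrim T ω).w t) ((toPrim T ω).v2 (t + 1)) := by
  rw [eMap_infoState2 S g hω, ← hγ]
  exact ⟨newState_succ S g _ t, z2Traj_eq_nextNewInfo S g _ t⟩

end InformationState

/-- Appendix B, equations (29) and (36) of the paper. There are
functions `φ_t` and `φ̂_t` such that, along every realization of positive
probability of the closed loop, the next new state of agent 2 satisfies
`S²_{t+1} = (X_{t+1}, L_{t+1}^{[1,2]}) = φ_t (S²_t, Π²_t, Γ_t^{[2,1]}, U²_t, W_t,
V¹_{t+1}, V²_{t+1})` and the new information of agent 2 satisfies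
`Z²_{t+1} = φ̂_t (S²_t, Π²_t, Γ_t^{[2,1]}, U²_t, W_t, V¹_{t+1}, V²_{t+1})`
(here `U¹_t = Γ_t^{[2,1]}(e_t(Π²_t, L_t^{[1,2]}))`, `X_{t+1} = f_t(X_t,U¹_t,U²_t,W_t)`,
`L_{t+1}^{[1,2]} = L_t^{[1,2]} ∪ {Y¹_{t+1}, U¹_t}`, `Y¹_{t+1} = h¹_{t+1}(X_{t+1},V¹_{t+1})`). -/
theorem newstate_update_functions
    [∀ t, Fintype (X t)] [∀ t, Fintype (U1 t)] [∀ t, Fintype (U2 t)]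
    [∀ t, Fintype (Y1 t)] [∀ t, Fintype (Y2 t)]
    (T : ℕ) (S : Sys X U1 U2 W V1 V2 Y1 Y2) (P : PrimPMF X W V1 V2) :
    ∃ (φ : ∀ t, (X t × Lp Y1 U1 t) → (X t × Lp Y1 U1 t → ℝ) → ((X t → ℝ) → U1 t) →
        U2 t → W t → V1 (t + 1) → V2 (t + 1) → X (t + 1) × Lp Y1 U1 (t + 1))
      (φhat : ∀ t, (X t × Lp Y1 U1 t) → (X t × Lp Y1 U1 t → ℝ) → ((X t → ℝ) → U1 t) →
        U2 t → W t → V1 (t + 1) → V2 (t + 1) → Y2 (t + 1) × U2 t),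
      ∀ (g : Strat U1 U2 Y1 Y2) (ψ : ∀ t, M2 Y2 U2 t → (X t → ℝ) → U1 t),
        Compat S g ψ P T →
        ∀ t, t < T → ∀ ω : ΩT X W V1 V2 T, 0 < mass P T ω →
          (xTraj S g (toPrim T ω) (t + 1), lpTraj S g (toPrim T ω) (t + 1)) =
            φ t (xTraj S g (toPrim T ω) t, lpTraj S g (toPrim T ω) t)
              (infoState2 S g P T ω t) (ψ t (m2Traj S g (toPrim T ω) t))
              (u2Traj S g (toPrim T ω) t) ((toPrim T ω).w t)
              ((toPrim T ω).v1 (t + 1)) ((toPrim T ω).v2 (t + 1)) ∧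
          z2Traj S g (toPrim T ω) t =
            φhat t (xTraj S g (toPrim T ω) t, lpTraj S g (toPrim T ω) t)
              (infoState2 S g P T ω t) (ψ t (m2Traj S g (toPrim T ω) t))
              (u2Traj S g (toPrim T ω) t) ((toPrim T ω).w t)
              ((toPrim T ω).v1 (t + 1)) ((toPrim T ω).v2 (t + 1)) :=
  ⟨fun t s π γ u2 w v1 _ => nextNewState S t s (γ (eMap t π s.2)) u2 w v1,
    fun t s π γ u2 w _ v2 => nextNewInfo S t s.1 (γ (eMap t π s.2)) u2 w v2,
    fun g _ hψ t ht ω hω => newstate_update_functions_general S g hω (hψ t ht.le ω hω)⟩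

end

end NestedTeam
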